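/- arXiv:2510.04099 — 2 statements merged into one kernel-verified Lean document; each statement's English description precedes it below -/
import Mathlib

section
/- Let m = 2^s with s an integer, s ≥ 2. Then every matrix A ∈ ℝ^{m×2} satisfies β_A > (1 − 1/(m·sin(π/(2m))))^{−1/2}; in particular min{β_A : A ∈ ℝ^{m×2}} > (1 − 1/(m·sin(π/(2m))))^{−1/2}. -/
noncomputable section

open Real
open scoped RealInnerProductSpace ENNReal

/-- ℝ² as a Euclidean space. -/
abbrev E2 : Type := EuclideanSpace ℝ (Fin 2)

/-- The vector `(x, y)` in ℝ². -/
def vec2 (x y : ℝ) : E2 := (WithLp.equiv 2 (Fin 2 → ℝ)).symm ![x, y]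

/-- The coordinates of a vector in ℝ². -/
def toFun2 (v : E2) : Fin 2 → ℝ := WithLp.equiv 2 (Fin 2 → ℝ) v

/-- The phaseless measurement map `Φ_A(x) = (|⟨a_j, x⟩|)_j`. -/
def PhiMap {m : ℕ} (a : Fin m → E2) (x : E2) : EuclideanSpace ℝ (Fin m) :=
  (WithLp.equiv 2 (Fin m → ℝ)).symm fun j => |⟪a j, x⟫|

/-- The distance `dist(x,y) = min ‖x − y‖ ‖x + y‖` (real phase retrieval distance). -/
def pdist (x y : E2) : ℝ := min ‖x - y‖ ‖x + y‖

/-- The set of Lipschitz ratios of the phaseless measurement map. -/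
def ratioSet {m : ℕ} (a : Fin m → E2) : Set ℝ :=
  {r | ∃ x y : E2, pdist x y ≠ 0 ∧ r = ‖PhiMap a x - PhiMap a y‖ / pdist x y}

/-- The optimal lower Lipschitz constant `L_A`. -/
def lipL {m : ℕ} (a : Fin m → E2) : ℝ := sInf (ratioSet a)

/-- The optimal upper Lipschitz constant `U_A`. -/
def lipU {m : ℕ} (a : Fin m → E2) : ℝ := sSup (ratioSet a)

/-- The condition number `β_A = U_A / L_A`, with `β_A = +∞` when `L_A = 0`. -/
def condNum {m : ℕ} (a : Fin m → E2) : ℝ≥0∞ :=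
  if lipL a = 0 then ⊤ else ENNReal.ofReal (lipU a / lipL a)

/-- An edge family: nonzero vectors with pairwise distinct directions summing to zero
(the edge vectors of a strictly convex polygon). -/
def IsEdgeFamily {m : ℕ} (e : Fin m → E2) : Prop :=
  (∀ j, e j ≠ 0) ∧
  (∀ i j : Fin m, i ≠ j → ‖e i‖⁻¹ • e i ≠ ‖e j‖⁻¹ • e j) ∧
  ∑ j, e j = 0

/-- The diameter-to-perimeter ratio of the polygon with edge vectors `e`. -/
def rRatio {m : ℕ} (e : Fin m → E2) : ℝ :=
  sSup {s | ∃ u : E2, ‖u‖ = 1 ∧ s = ∑ j, |⟪e j, u⟫|} / (2 * ∑ j, ‖e j‖)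

/-- An optimal edge family: minimizes `rRatio` among all edge families of size `m`. -/
def IsOptimalEdgeFamily {m : ℕ} (e : Fin m → E2) : Prop :=
  IsEdgeFamily e ∧ ∀ e' : Fin m → E2, IsEdgeFamily e' → rRatio e ≤ rRatio e'

/-- The complex square map on ℝ² ≅ ℂ: `f(t·(cos φ, sin φ)) = t²·(cos 2φ, sin 2φ)`. -/
def csq (v : E2) : E2 :=
  vec2 (toFun2 v 0 ^ 2 - toFun2 v 1 ^ 2) (2 * toFun2 v 0 * toFun2 v 1)

/-- The harmonic frame `E_m`: the `j`-th row is `(cos((j−1)π/m), sin((j−1)π/m))`, `j = 1,…,m`. -/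
def harmonicFrame (m : ℕ) : Fin m → E2 :=
  fun j => vec2 (Real.cos ((j : ℕ) * π / m)) (Real.sin ((j : ℕ) * π / m))

/-!
Identify `ℝ²` with `ℂ` and put `z j = (a j)²`. By the double-angle formula,
`2 U² ≥ ∑ |z j| + |∑ z j|` and `2 L² ≤ ∑ |z j| - max_ε |∑ ε j z j|`, where `ε` runs over all choices
of signs. Twice this maximum is the diameter of the zonogon `∑ [-z j, z j]`, whose perimeter is
`4 ∑ |z j|`; so Reinhardt's inequality between perimeter and diameter gives
`∑ |z j| ≤ m sin (π / (2 m)) * max_ε |∑ ε j z j|`, and these bounds together show `U² / L²` to be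
at least `(1 - 1 / (m sin (π / (2 m))))⁻¹`.

Equality would require `∑ z j = 0` and a regular zonogon, that is, `z j = ± D ω ^ j` up to order,
with `ω = exp (π i / m)`. For `m` a power of two, `1, ω, …, ω ^ (m - 1)` are linearly independent
over `ℚ`, so that these two conditions exclude each other. Homogeneity and compactness of the unit
sphere make the resulting gap uniform in `A`, hence the infimum is also strictly above the bound.
-/

section Jensen

variable {ι : Type*} [Fintype ι] [Nonempty ι] {s : Set ℝ} {f : ℝ → ℝ} {x : ι → ℝ}

lemma sum_le_card_mul_map_avg (hf : ConcaveOn ℝ s f) (hx : ∀ i, x i ∈ s) :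
    ∑ i, f (x i) ≤ Fintype.card ι * f ((∑ i, x i) / Fintype.card ι) := by
  have hcard : (0 : ℝ) < Fintype.card ι := by exact_mod_cast Fintype.card_pos
  have h := hf.le_map_sum (t := Finset.univ) (w := fun _ => (Fintype.card ι : ℝ)⁻¹)
    (fun _ _ => by positivity) (by simp) (fun i _ => hx i)
  simp only [smul_eq_mul, ← Finset.mul_sum] at h
  rwa [inv_mul_le_iff₀ hcard, inv_mul_eq_div] at h

lemma eq_avg_of_card_mul_map_avg_le (hf : StrictConcaveOn ℝ s f) (hx : ∀ i, x i ∈ s)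
    (h : Fintype.card ι * f ((∑ i, x i) / Fintype.card ι) ≤ ∑ i, f (x i)) (i : ι) :
    x i = (∑ j, x j) / Fintype.card ι := by
  have hcard : (0 : ℝ) < Fintype.card ι := by exact_mod_cast Fintype.card_pos
  have hiff := hf.map_sum_eq_iff (t := Finset.univ) (w := fun _ => (Fintype.card ι : ℝ)⁻¹)
    (fun _ _ => by positivity) (by simp) (fun i _ => hx i)
  simp only [smul_eq_mul, ← Finset.mul_sum] at hiff
  simp only [inv_mul_eq_div] at hiff
  refine hiff.mp ?_ i (Finset.mem_univ i)
  rw [eq_div_iff hcard.ne', mul_comm]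
  exact h.antisymm (sum_le_card_mul_map_avg hf.concaveOn hx)

end Jensen

section InnerProduct

variable {E : Type*} [NormedAddCommGroup E] [InnerProductSpace ℝ E]

lemma norm_smul_eq_smul_of_mul_norm_le_inner {x y : E} {M : ℝ} (hx : ‖x‖ ≤ M)
    (h : M * ‖y‖ ≤ ⟪x, y⟫) : ‖y‖ • x = M • y := by
  have hxy : ‖x‖ * ‖y‖ = M * ‖y‖ :=
    le_antisymm (by gcongr) (h.trans (real_inner_le_norm x y))
  have hparallel : ‖y‖ • x = ‖x‖ • y :=
    inner_eq_norm_mul_iff_real.mp ((real_inner_le_norm x y).antisymm (hxy ▸ h))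
  rcases eq_or_ne y 0 with rfl | hy
  · simp only [norm_zero, zero_smul, smul_zero]
  · rw [hparallel, mul_right_cancel₀ (norm_ne_zero_iff.mpr hy) hxy]

lemma exists_norm_eq_one_inner_eq_norm [Nontrivial E] (V : E) :
    ∃ e : E, ‖e‖ = 1 ∧ ⟪V, e⟫ = ‖V‖ := by
  rcases eq_or_ne V 0 with rfl | hV
  · obtain ⟨e, he⟩ := exists_norm_eq E zero_le_one
    exact ⟨e, he, by rw [inner_zero_left, norm_zero]⟩
  · refine ⟨NormedSpace.normalize V, NormedSpace.norm_normalize hV, ?_⟩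
    have hV' : ‖V‖ ≠ 0 := norm_ne_zero_iff.mpr hV
    rw [NormedSpace.normalize, inner_smul_right, real_inner_self_eq_norm_sq]
    field_simp

lemma inner_units_smul_left (ε : ℤˣ) (x y : E) : ⟪ε • x, y⟫ = ε • ⟪x, y⟫ := by
  rcases Int.units_eq_one_or ε with rfl | rfl <;> simp [Units.smul_def]

/-- Abel summation along a curve `v` whose steps have directions `e k`. -/
lemma sum_eq_sum_inner_sub_of_antiperiodic {m : ℕ} {r : Fin m → ℝ} {v e : ℕ → E}
    (he : ∀ k, ‖e k‖ = 1) (hv : ∀ k : Fin m, v (k + 1) - v k = r k • e k)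
    (hvm : v m = -v 0) (hem : e m = -e 0) :
    ∑ k, r k = ∑ k : Fin m, ⟪v (k + 1), e k - e (k + 1)⟫ := by
  have hstep (k : Fin m) : r k =
      ⟪v (k + 1), e k - e (k + 1)⟫ + (⟪v (k + 1), e (k + 1)⟫ - ⟪v k, e k⟫) := by
    have h : ⟪v (k + 1) - v k, e k⟫ = r k := by
      rw [hv, real_inner_smul_left, real_inner_self_eq_norm_sq, he, one_pow, mul_one]
    rw [← h, inner_sub_left, inner_sub_right]
    ring
  have htelescope : ∑ k : Fin m, (⟪v (k + 1), e (k + 1)⟫ - ⟪v k, e k⟫) = 0 := by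
    rw [Fin.sum_univ_eq_sum_range (fun k => ⟪v (k + 1), e (k + 1)⟫ - ⟪v k, e k⟫),
      Finset.sum_range_sub (fun k => ⟪v k, e k⟫), hvm, hem, inner_neg_neg, sub_self]
  rw [Finset.sum_congr rfl fun k _ => hstep k, Finset.sum_add_distrib, htelescope, add_zero]

end InnerProduct

/-- The largest norm of a signed sum `∑ ±zᵢ`: half the diameter of the zonotope generated by the
segments `[-zᵢ, zᵢ]`. -/
def maxSignedSum {ι E : Type*} [Fintype ι] [SeminormedAddCommGroup E] (z : ι → E) : ℝ :=
  ⨆ ε : ι → ℤˣ, ‖∑ i, ε i • z i‖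

section MaxSignedSum

variable {ι E : Type*} [Fintype ι] [SeminormedAddCommGroup E]

lemma norm_sum_units_smul_le_maxSignedSum (ε : ι → ℤˣ) (z : ι → E) :
    ‖∑ i, ε i • z i‖ ≤ maxSignedSum z :=
  le_ciSup (f := fun ε : ι → ℤˣ => ‖∑ i, ε i • z i‖) (Set.finite_range _).bddAbove ε

lemma exists_norm_sum_units_smul_eq_maxSignedSum (z : ι → E) :
    ∃ ε : ι → ℤˣ, ‖∑ i, ε i • z i‖ = maxSignedSum z :=
  exists_eq_ciSup_of_finite

lemma maxSignedSum_units_smul_comp_perm (σ : ι → ℤˣ) (τ : Equiv.Perm ι) (z : ι → E) :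
    maxSignedSum (fun i => σ i • z (τ i)) = maxSignedSum z := by
  refine Equiv.iSup_congr ((Equiv.mulRight σ).trans (τ.arrowCongr (Equiv.refl ℤˣ))) fun ε => ?_
  rw [← Equiv.sum_comp τ]
  simp [mul_smul]

lemma maxSignedSum_smul [NormedSpace ℝ E] {c : ℝ} (hc : 0 ≤ c) (z : ι → E) :
    maxSignedSum (c • z) = c * maxSignedSum z := by
  have h (ε : ι → ℤˣ) : ‖∑ i, ε i • (c • z) i‖ = c * ‖∑ i, ε i • z i‖ := by
    simp only [Pi.smul_apply, smul_comm _ c, ← Finset.smul_sum, norm_smul, Real.norm_of_nonneg hc]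
  simp only [maxSignedSum, h, Real.mul_iSup_of_nonneg hc]

lemma maxSignedSum_map {F : Type*} [SeminormedAddCommGroup F] [Module ℝ E] [Module ℝ F]
    (f : E →ₗᵢ[ℝ] F) (z : ι → E) : maxSignedSum (fun i => f (z i)) = maxSignedSum z := by
  have h (ε : ι → ℤˣ) : ∑ i, ε i • f (z i) = f (∑ i, ε i • z i) := by
    simp only [map_sum, Units.smul_def, map_zsmul]
  simp only [maxSignedSum, h, f.norm_map]

lemma continuous_maxSignedSum : Continuous (maxSignedSum : (ι → E) → ℝ) := by
  classical
  have h : (maxSignedSum : (ι → E) → ℝ) = fun z =>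
      Finset.univ.sup' Finset.univ_nonempty fun ε : ι → ℤˣ => ‖∑ i, ε i • z i‖ :=
    funext fun z => (Finset.sup'_univ_eq_ciSup _).symm
  rw [h]
  refine Continuous.finset_sup'_apply _ fun ε _ => ?_
  simp only [Units.smul_def]
  fun_prop

end MaxSignedSum

section Zonogon

variable {E : Type*} [SeminormedAddCommGroup E] {m : ℕ}

/-- The signed sum of `w` whose first `k` signs are positive and whose others are negative. When
`w` is sorted by angle, these are consecutive vertices of half of the boundary of the zonogon
`∑ [-wᵢ, wᵢ]`. -/
def zonogonVertex (w : Fin m → E) (k : ℕ) : E :=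
  ∑ i : Fin m, (if (i : ℕ) < k then 1 else -1 : ℤˣ) • w i

lemma norm_zonogonVertex_le (w : Fin m → E) (k : ℕ) : ‖zonogonVertex w k‖ ≤ maxSignedSum w :=
  norm_sum_units_smul_le_maxSignedSum (fun i : Fin m => if (i : ℕ) < k then 1 else -1) w

lemma zonogonVertex_self (w : Fin m → E) : zonogonVertex w m = -zonogonVertex w 0 := by
  simp [zonogonVertex, Units.smul_def]

lemma zonogonVertex_succ_sub (w : Fin m → E) (k : Fin m) :
    zonogonVertex w (k + 1) - zonogonVertex w k = 2 • w k := by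
  rw [zonogonVertex, zonogonVertex, ← Finset.sum_sub_distrib, Finset.sum_eq_single k]
  · simp [Units.smul_def, two_smul]
  · intro i _ hik
    have hiff : (i : ℕ) < k + 1 ↔ (i : ℕ) < k := by
      have := Fin.val_ne_of_ne hik
      omega
    simp only [hiff, sub_self]
  · exact fun hk => absurd (Finset.mem_univ k) hk

end Zonogon

section Reinhardt

open Complex (I)

lemma norm_exp_mul_I_sub_exp_mul_I {a b : ℝ} (h : (b - a) / 2 ∈ Set.Icc 0 π) :
    ‖Complex.exp (a * I) - Complex.exp (b * I)‖ = 2 * sin ((b - a) / 2) := by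
  have hfactor : Complex.exp (b * I) - Complex.exp (a * I) =
      Complex.exp (a * I) * (Complex.exp (I * (b - a : ℝ)) - 1) := by
    rw [mul_sub, ← Complex.exp_add]
    push_cast
    ring_nf
  rw [norm_sub_rev, hfactor, norm_mul, Complex.norm_exp_ofReal_mul_I,
    Complex.norm_exp_I_mul_ofReal_sub_one, one_mul, Real.norm_of_nonneg]
  exact mul_nonneg zero_le_two (sin_nonneg_of_mem_Icc h)

/-- Half the perimeter-to-diameter ratio of the regular `2m`-gon, which is the largest possible
among centrally symmetric `2m`-gons. -/
def reinhardtConst (m : ℕ) : ℝ := m * sin (π / (2 * m))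

lemma one_lt_reinhardtConst {m : ℕ} (hm : 2 ≤ m) : 1 < reinhardtConst m := by
  have hm' : (2 : ℝ) ≤ m := by exact_mod_cast hm
  have hjordan : 2 / π * (π / (2 * m)) < sin (π / (2 * m)) :=
    mul_lt_sin (by positivity) (div_lt_div_of_pos_left pi_pos two_pos (by linarith))
  calc 1 = m * (2 / π * (π / (2 * m))) := by field_simp
    _ < reinhardtConst m := mul_lt_mul_of_pos_left hjordan (by linarith)

lemma sin_pi_div_two_mul_pos (m : ℕ) [NeZero m] : 0 < sin (π / (2 * m)) := by
  have hm : (1 : ℝ) ≤ m := by exact_mod_cast NeZero.one_le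
  refine sin_pos_of_pos_of_lt_pi (by positivity) ?_
  exact div_lt_self pi_pos (by linarith)

/-- The family `w` lists complex numbers by increasing argument within a half turn starting at
`φ 0`; only the values of `φ` at `0, …, m` matter, and `φ m` closes the half turn. -/
structure IsAngleSorted {m : ℕ} (w : Fin m → ℂ) (φ : ℕ → ℝ) : Prop where
  monotone : Monotone φ
  half_turn : φ m = φ 0 + π
  polar : ∀ k : Fin m, w k = ‖w k‖ * Complex.exp (φ k * I)

namespace IsAngleSorted

variable {m : ℕ} {w : Fin m → ℂ} {φ : ℕ → ℝ}

lemma half_gap_mem_Icc (h : IsAngleSorted w φ) (k : Fin m) :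
    (φ (k + 1) - φ k) / 2 ∈ Set.Icc 0 π := by
  have h0 : φ 0 ≤ φ k := h.monotone (Nat.zero_le _)
  have hk : φ k ≤ φ (k + 1) := h.monotone (Nat.le_succ _)
  have hm : φ (k + 1) ≤ φ m := h.monotone k.isLt
  rw [h.half_turn] at hm
  constructor <;> linarith [pi_pos]

lemma avg_half_gap (h : IsAngleSorted w φ) :
    (∑ k : Fin m, (φ (k + 1) - φ k) / 2) / Fintype.card (Fin m) = π / (2 * m) := by
  rw [← Finset.sum_div, Fin.sum_univ_eq_sum_range (fun k => φ (k + 1) - φ k),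
    Finset.sum_range_sub, h.half_turn, add_sub_cancel_left, Fintype.card_fin, div_div]

lemma sum_sin_half_gap_le [NeZero m] (h : IsAngleSorted w φ) :
    ∑ k : Fin m, sin ((φ (k + 1) - φ k) / 2) ≤ reinhardtConst m := by
  have hjensen := sum_le_card_mul_map_avg strictConcaveOn_sin_Icc.concaveOn h.half_gap_mem_Icc
  rwa [h.avg_half_gap, Fintype.card_fin] at hjensen

lemma exp_half_turn (h : IsAngleSorted w φ) :
    Complex.exp (φ m * I) = -Complex.exp (φ 0 * I) := by
  rw [h.half_turn, Complex.ofReal_add, add_mul, Complex.exp_add, Complex.exp_pi_mul_I,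
    mul_neg_one]

lemma two_mul_sum_norm_eq (h : IsAngleSorted w φ) :
    2 * ∑ k, ‖w k‖ = ∑ k : Fin m, ⟪zonogonVertex w (k + 1),
      Complex.exp (φ k * I) - Complex.exp (φ (k + 1) * I)⟫ := by
  rw [Finset.mul_sum]
  refine sum_eq_sum_inner_sub_of_antiperiodic (e := fun k => Complex.exp (φ k * I))
    (fun k => Complex.norm_exp_ofReal_mul_I _) (fun k => ?_)
    (zonogonVertex_self w) h.exp_half_turn
  rw [zonogonVertex_succ_sub, mul_smul, Complex.real_smul, Complex.real_smul, ← h.polar,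
    two_smul, Complex.ofReal_ofNat, two_mul]

lemma inner_zonogonVertex_le (h : IsAngleSorted w φ) (k : Fin m) :
    ⟪zonogonVertex w (k + 1), Complex.exp (φ k * I) - Complex.exp (φ (k + 1) * I)⟫ ≤
      maxSignedSum w * (2 * sin ((φ (k + 1) - φ k) / 2)) := by
  rw [← norm_exp_mul_I_sub_exp_mul_I (h.half_gap_mem_Icc k)]
  exact (real_inner_le_norm _ _).trans (by gcongr; exact norm_zonogonVertex_le w _)

lemma sum_norm_le_mul_sum_sin (h : IsAngleSorted w φ) :
    ∑ k, ‖w k‖ ≤ maxSignedSum w * ∑ k : Fin m, sin ((φ (k + 1) - φ k) / 2) := by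
  have hsum := Finset.sum_le_sum fun k (_ : k ∈ Finset.univ) => h.inner_zonogonVertex_le k
  rw [← h.two_mul_sum_norm_eq, ← Finset.mul_sum, ← Finset.mul_sum] at hsum
  linarith

lemma sum_norm_le [NeZero m] (h : IsAngleSorted w φ) :
    ∑ k, ‖w k‖ ≤ maxSignedSum w * reinhardtConst m :=
  h.sum_norm_le_mul_sum_sin.trans <| mul_le_mul_of_nonneg_left h.sum_sin_half_gap_le <|
    (norm_nonneg _).trans (norm_zonogonVertex_le w 0)

section Extremal

variable [NeZero m]

lemma half_gap_eq (h : IsAngleSorted w φ) (hpos : 0 < maxSignedSum w)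
    (hext : maxSignedSum w * reinhardtConst m ≤ ∑ k, ‖w k‖) (k : Fin m) :
    (φ (k + 1) - φ k) / 2 = π / (2 * m) := by
  have hsin : reinhardtConst m ≤ ∑ k : Fin m, sin ((φ (k + 1) - φ k) / 2) :=
    le_of_mul_le_mul_left (hext.trans h.sum_norm_le_mul_sum_sin) hpos
  rw [← h.avg_half_gap]
  refine eq_avg_of_card_mul_map_avg_le strictConcaveOn_sin_Icc h.half_gap_mem_Icc ?_ k
  rwa [h.avg_half_gap, Fintype.card_fin]

lemma exp_succ_eq_mul (h : IsAngleSorted w φ) (hpos : 0 < maxSignedSum w)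
    (hext : maxSignedSum w * reinhardtConst m ≤ ∑ k, ‖w k‖) (k : Fin m) :
    Complex.exp (φ (k + 1) * I) = Complex.exp (φ k * I) * Complex.exp (π / m * I) := by
  have hgap : φ (k + 1) = φ k + π / m := by
    have := h.half_gap_eq hpos hext k
    field_simp at this ⊢
    linarith
  rw [hgap, ← Complex.exp_add]
  push_cast
  ring_nf

lemma exp_eq_mul_pow (h : IsAngleSorted w φ) (hpos : 0 < maxSignedSum w)
    (hext : maxSignedSum w * reinhardtConst m ≤ ∑ k, ‖w k‖) {k : ℕ} (hk : k ≤ m) :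
    Complex.exp (φ k * I) = Complex.exp (φ 0 * I) * Complex.exp (π / m * I) ^ k := by
  induction k with
  | zero => rw [pow_zero, mul_one]
  | succ k ih =>
    rw [h.exp_succ_eq_mul hpos hext ⟨k, hk⟩, ih (Nat.le_of_succ_le hk), pow_succ, mul_assoc]

lemma inner_zonogonVertex_eq (h : IsAngleSorted w φ)
    (hext : maxSignedSum w * reinhardtConst m ≤ ∑ k, ‖w k‖) (k : Fin m) :
    ⟪zonogonVertex w (k + 1), Complex.exp (φ k * I) - Complex.exp (φ (k + 1) * I)⟫ =
      maxSignedSum w * (2 * sin ((φ (k + 1) - φ k) / 2)) := by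
  have hM : 0 ≤ maxSignedSum w := (norm_nonneg _).trans (norm_zonogonVertex_le w 0)
  have hsum : ∑ k : Fin m, maxSignedSum w * (2 * sin ((φ (k + 1) - φ k) / 2)) ≤
      ∑ k : Fin m, ⟪zonogonVertex w (k + 1),
        Complex.exp (φ k * I) - Complex.exp (φ (k + 1) * I)⟫ := by
    rw [← h.two_mul_sum_norm_eq, ← Finset.mul_sum, ← Finset.mul_sum]
    linarith [mul_le_mul_of_nonneg_left h.sum_sin_half_gap_le hM]
  exact (Finset.sum_eq_sum_iff_of_le fun k _ => h.inner_zonogonVertex_le k).mp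
    ((Finset.sum_le_sum fun k _ => h.inner_zonogonVertex_le k).antisymm hsum) k
    (Finset.mem_univ k)

lemma smul_zonogonVertex_succ (h : IsAngleSorted w φ) (hpos : 0 < maxSignedSum w)
    (hext : maxSignedSum w * reinhardtConst m ≤ ∑ k, ‖w k‖) (k : Fin m) :
    (2 * sin (π / (2 * m))) • zonogonVertex w (k + 1) =
      maxSignedSum w • (Complex.exp (φ k * I) - Complex.exp (φ (k + 1) * I)) := by
  have hchord := norm_exp_mul_I_sub_exp_mul_I (h.half_gap_mem_Icc k)
  rw [← h.half_gap_eq hpos hext k, ← hchord]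
  refine norm_smul_eq_smul_of_mul_norm_le_inner (norm_zonogonVertex_le w _) ?_
  rw [h.inner_zonogonVertex_eq hext k, hchord]

lemma exists_zonogonVertex_eq_mul_exp (h : IsAngleSorted w φ) (hpos : 0 < maxSignedSum w)
    (hext : maxSignedSum w * reinhardtConst m ≤ ∑ k, ‖w k‖) :
    ∃ C : ℂ, ∀ k ≤ m, zonogonVertex w k = C * Complex.exp (φ k * I) := by
  set S : ℝ := 2 * sin (π / (2 * m)) with hS
  set ω : ℂ := Complex.exp (π / m * I) with hω
  have hS0 : (S : ℂ) ≠ 0 :=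
    Complex.ofReal_ne_zero.mpr (mul_pos two_pos (sin_pi_div_two_mul_pos m)).ne'
  have hsucc (k : Fin m) : zonogonVertex w (k + 1) =
      maxSignedSum w / S * (ω⁻¹ - 1) * Complex.exp (φ (k + 1) * I) := by
    have hvertex := h.smul_zonogonVertex_succ hpos hext k
    rw [← hS, Complex.real_smul, Complex.real_smul] at hvertex
    rw [h.exp_succ_eq_mul hpos hext, ← hω] at hvertex ⊢
    have hω0 : ω ≠ 0 := Complex.exp_ne_zero _
    field_simp
    linear_combination hvertex
  refine ⟨maxSignedSum w / S * (ω⁻¹ - 1), fun k hk => ?_⟩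
  cases k with
  | zero =>
    have hlast := hsucc (Fin.ofNat m (m - 1))
    have hcast : ((Fin.ofNat m (m - 1) : Fin m) : ℕ) + 1 = m := by
      have := NeZero.pos m
      rw [Fin.val_ofNat, Nat.mod_eq_of_lt (by omega)]
      omega
    rw [hcast, zonogonVertex_self, h.exp_half_turn, mul_neg] at hlast
    exact neg_injective hlast
  | succ k => exact hsucc ⟨k, hk⟩

/-- Reinhardt's equality case: the zonogon is a regular `2m`-gon. -/
lemma exists_eq_mul_pow (h : IsAngleSorted w φ) (hpos : 0 < maxSignedSum w)
    (hext : maxSignedSum w * reinhardtConst m ≤ ∑ k, ‖w k‖) :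
    ∃ D : ℂ, ∀ k : Fin m, w k = D * Complex.exp (π / m * I) ^ (k : ℕ) := by
  obtain ⟨C, hC⟩ := h.exists_zonogonVertex_eq_mul_exp hpos hext
  refine ⟨C * (Complex.exp (π / m * I) - 1) * Complex.exp (φ 0 * I) / 2, fun k => ?_⟩
  have hstep := zonogonVertex_succ_sub w k
  rw [hC _ k.isLt, hC _ k.isLt.le, h.exp_succ_eq_mul hpos hext,
    h.exp_eq_mul_pow hpos hext k.isLt.le, two_smul] at hstep
  linear_combination -hstep / 2

end Extremal

end IsAngleSorted

lemma exists_units_smul_eq_norm_mul_exp (z : ℂ) :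
    ∃ (σ : ℤˣ) (θ : ℝ), θ ∈ Set.Icc 0 π ∧ σ • z = ‖z‖ * Complex.exp (θ * I) := by
  rcases le_or_gt 0 z.arg with h | h
  · exact ⟨1, z.arg, ⟨h, Complex.arg_le_pi z⟩, by rw [one_smul, Complex.norm_mul_exp_arg_mul_I]⟩
  · refine ⟨-1, z.arg + π, ⟨by linarith [Complex.neg_pi_lt_arg z], by linarith⟩, ?_⟩
    rw [Complex.ofReal_add, add_mul, Complex.exp_add, Complex.exp_pi_mul_I, mul_neg_one, mul_neg,
      Complex.norm_mul_exp_arg_mul_I, Units.smul_def, Units.val_neg, Units.val_one, neg_one_zsmul]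

variable {m : ℕ} [NeZero m]

lemma exists_isAngleSorted (z : Fin m → ℂ) :
    ∃ (σ : Fin m → ℤˣ) (τ : Equiv.Perm (Fin m)) (φ : ℕ → ℝ),
      IsAngleSorted (fun k => σ k • z (τ k)) φ := by
  choose σ θ hθ hpolar using fun j => exists_units_smul_eq_norm_mul_exp (z j)
  set τ := Tuple.sort θ
  have hsort : Monotone (θ ∘ τ) := Tuple.monotone_sort θ
  let φ : ℕ → ℝ := fun k => if hk : k < m then θ (τ ⟨k, hk⟩) else θ (τ 0) + π
  have hφ (k : ℕ) (hk : k < m) : φ k = θ (τ ⟨k, hk⟩) := dif_pos hk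
  have hφ' (k : ℕ) (hk : ¬ k < m) : φ k = θ (τ 0) + π := dif_neg hk
  refine ⟨σ ∘ τ, τ, φ, ?_, ?_, fun k => ?_⟩
  · refine monotone_nat_of_le_succ fun k => ?_
    by_cases hk : k + 1 < m
    · rw [hφ k (by omega), hφ _ hk]
      exact hsort (Fin.mk_le_mk.mpr k.le_succ)
    · rw [hφ' _ hk]
      by_cases hk' : k < m
      · rw [hφ k hk']
        linarith [(hθ (τ ⟨k, hk'⟩)).2, (hθ (τ 0)).1]
      · exact (hφ' k hk').le
  · rw [hφ' m (lt_irrefl m), hφ 0 (NeZero.pos m)]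
    rfl
  · rw [hφ k k.isLt, Function.comp_apply, norm_units_zsmul, hpolar]

lemma sum_norm_le_maxSignedSum_mul (z : Fin m → ℂ) :
    ∑ j, ‖z j‖ ≤ maxSignedSum z * reinhardtConst m := by
  obtain ⟨σ, τ, φ, h⟩ := exists_isAngleSorted z
  have hle := h.sum_norm_le
  simp only [norm_units_zsmul, maxSignedSum_units_smul_comp_perm] at hle
  rwa [Equiv.sum_comp τ fun j => ‖z j‖] at hle

lemma exists_units_smul_eq_mul_pow {z : Fin m → ℂ} (hpos : 0 < maxSignedSum z)
    (hext : maxSignedSum z * reinhardtConst m ≤ ∑ j, ‖z j‖) :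
    ∃ (σ : Fin m → ℤˣ) (τ : Equiv.Perm (Fin m)) (D : ℂ),
      ∀ k, z (τ k) = D * σ k • Complex.exp (π / m * I) ^ (k : ℕ) := by
  obtain ⟨σ, τ, φ, h⟩ := exists_isAngleSorted z
  obtain ⟨D, hD⟩ := h.exists_eq_mul_pow (by rwa [maxSignedSum_units_smul_comp_perm]) (by
    simpa only [norm_units_zsmul, maxSignedSum_units_smul_comp_perm,
      Equiv.sum_comp τ fun j => ‖z j‖] using hext)
  refine ⟨σ, τ, D, fun k => ?_⟩
  rw [mul_smul_comm, ← hD, smul_smul, Int.units_mul_self, one_smul]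

lemma maxSignedSum_pos {z : Fin m → ℂ} (hz : z ≠ 0) : 0 < maxSignedSum z := by
  have hM : 0 ≤ maxSignedSum z :=
    (norm_nonneg _).trans (norm_sum_units_smul_le_maxSignedSum 1 z)
  refine hM.lt_of_ne fun hM0 => hz (funext fun i => norm_le_zero_iff.mp ?_)
  calc ‖z i‖ ≤ ∑ j, ‖z j‖ :=
        Finset.single_le_sum (fun j _ => norm_nonneg (z j)) (Finset.mem_univ i)
    _ ≤ maxSignedSum z * reinhardtConst m := sum_norm_le_maxSignedSum_mul z
    _ = 0 := by rw [← hM0, zero_mul]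

lemma sum_ne_zero_of_maxSignedSum_mul_le
    (hω : ∀ σ : Fin m → ℤˣ, ∑ k, σ k • Complex.exp (π / m * I) ^ (k : ℕ) ≠ 0)
    {z : Fin m → ℂ} (hz : z ≠ 0) (hext : maxSignedSum z * reinhardtConst m ≤ ∑ j, ‖z j‖) :
    ∑ j, z j ≠ 0 := by
  obtain ⟨σ, τ, D, hD⟩ := exists_units_smul_eq_mul_pow (maxSignedSum_pos hz) hext
  have hD0 : D ≠ 0 := by
    rintro rfl
    refine hz (funext fun i => ?_)
    rw [← τ.apply_symm_apply i, hD, zero_mul, Pi.zero_apply]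
  rw [← Equiv.sum_comp τ z, Finset.sum_congr rfl fun k _ => hD k, ← Finset.mul_sum]
  exact mul_ne_zero hD0 (hω σ)

end Reinhardt

section Cyclotomic

lemma linearIndependent_pow_of_isPrimitiveRoot {K : Type*} [Field K] [CharZero K] {n : ℕ}
    [NeZero n] {ω : K} (hω : IsPrimitiveRoot ω n) :
    LinearIndependent ℚ fun k : Fin n.totient => ω ^ (k : ℕ) := by
  have hdeg : (minpoly ℚ ω).natDegree = n.totient := by
    rw [← Polynomial.cyclotomic_eq_minpoly_rat hω (NeZero.pos n), Polynomial.natDegree_cyclotomic]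
  exact hdeg ▸ linearIndependent_pow (K := ℚ) ω

lemma sum_units_smul_pow_ne_zero {K : Type*} [Field K] [CharZero K] {s : ℕ} {ω : K}
    (hω : IsPrimitiveRoot ω (2 ^ (s + 1))) (σ : Fin (2 ^ s) → ℤˣ) :
    ∑ k, σ k • ω ^ (k : ℕ) ≠ 0 := by
  have htotient : (2 ^ (s + 1)).totient = 2 ^ s := by
    rw [Nat.totient_prime_pow_succ Nat.prime_two, Nat.add_one_sub_one, mul_one]
  have hind : LinearIndependent ℚ fun k : Fin (2 ^ s) => ω ^ (k : ℕ) :=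
    htotient ▸ linearIndependent_pow_of_isPrimitiveRoot hω
  intro hsum
  have hzero := Fintype.linearIndependent_iff.mp hind (fun k => ((σ k : ℤ) : ℚ)) (by
    simpa only [Units.smul_def, Int.cast_smul_eq_zsmul] using hsum) 0
  exact (σ 0).ne_zero (by exact_mod_cast hzero)

end Cyclotomic

section Compactness

lemma exists_lt_forall_le_mul_of_homogeneous {E : Type*} [NormedAddCommGroup E] [NormedSpace ℝ E]
    [FiniteDimensional ℝ E] {u v : E → ℝ} {K : ℝ} (hu : Continuous u) (hv : Continuous v)
    (hu_smul : ∀ c x, 0 ≤ c → u (c • x) = c * u x) (hv_smul : ∀ c x, 0 ≤ c → v (c • x) = c * v x)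
    (hv_pos : ∀ x ≠ 0, 0 < v x) (hK : 0 < K) (huv : ∀ x ≠ 0, u x < K * v x) :
    ∃ b, 0 < b ∧ b < K ∧ ∀ x, u x ≤ b * v x := by
  have hsphere : ∃ b, 0 < b ∧ b < K ∧ ∀ x ∈ Metric.sphere (0 : E) 1, u x ≤ b * v x := by
    rcases (Metric.sphere (0 : E) 1).eq_empty_or_nonempty with hempty | hne
    · exact ⟨K / 2, half_pos hK, half_lt_self hK, by simp [hempty]⟩
    have hv_pos' : ∀ x ∈ Metric.sphere (0 : E) 1, 0 < v x := fun x hx =>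
      hv_pos x (ne_zero_of_mem_unit_sphere ⟨x, hx⟩)
    obtain ⟨x₀, hx₀, hmax⟩ := (isCompact_sphere (0 : E) 1).exists_isMaxOn hne
      (hu.continuousOn.div hv.continuousOn fun x hx => (hv_pos' x hx).ne')
    refine ⟨max (u x₀ / v x₀) (K / 2), lt_max_of_lt_right (half_pos hK), max_lt ?_
      (half_lt_self hK), fun x hx => ?_⟩
    · exact (div_lt_iff₀ (hv_pos' x₀ hx₀)).mpr (huv x₀ (ne_zero_of_mem_unit_sphere ⟨x₀, hx₀⟩))
    · exact (div_le_iff₀ (hv_pos' x hx)).mp ((hmax hx).trans (le_max_left _ _))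
  obtain ⟨b, hb, hbK, hle⟩ := hsphere
  refine ⟨b, hb, hbK, fun x => ?_⟩
  rcases eq_or_ne x 0 with rfl | hx
  · have hu0 := hu_smul 0 0 le_rfl
    have hv0 := hv_smul 0 0 le_rfl
    rw [zero_smul, zero_mul] at hu0 hv0
    rw [hu0, hv0, mul_zero]
  · have hnormalize := hle (‖x‖⁻¹ • x) (by
      rw [mem_sphere_zero_iff_norm]
      exact NormedSpace.norm_normalize hx)
    rw [hu_smul _ _ (by positivity), hv_smul _ _ (by positivity), mul_left_comm] at hnormalize
    exact le_of_mul_le_mul_left hnormalize (by positivity)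

end Compactness

section SignedSumDeficit

variable {m : ℕ}

lemma sum_norm_sub_maxSignedSum_lt (hm : 2 ≤ m)
    (hω : ∀ σ : Fin m → ℤˣ, ∑ k, σ k • Complex.exp (π / m * Complex.I) ^ (k : ℕ) ≠ 0)
    {z : Fin m → ℂ} (hz : z ≠ 0) :
    ∑ j, ‖z j‖ - maxSignedSum z <
      (1 - 1 / reinhardtConst m) * (∑ j, ‖z j‖ + ‖∑ j, z j‖) := by
  have : NeZero m := ⟨by omega⟩
  have hT := one_lt_reinhardtConst hm
  have hT0 : 0 < reinhardtConst m := one_pos.trans hT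
  have hfactor : 0 < 1 - 1 / reinhardtConst m := sub_pos.mpr ((div_lt_one hT0).mpr hT)
  have hsum : 0 ≤ (1 - 1 / reinhardtConst m) * ‖∑ j, z j‖ := by positivity
  suffices h : 1 / reinhardtConst m * ∑ j, ‖z j‖ <
      maxSignedSum z + (1 - 1 / reinhardtConst m) * ‖∑ j, z j‖ by linarith
  rw [one_div_mul_eq_div]
  rcases (sum_norm_le_maxSignedSum_mul z).lt_or_eq with hlt | heq
  · linarith [(div_lt_iff₀ hT0).mpr hlt]
  · have hpos := norm_pos_iff.mpr (sum_ne_zero_of_maxSignedSum_mul_le hω hz heq.ge)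
    rw [heq, mul_div_cancel_right₀ _ hT0.ne']
    exact lt_add_of_pos_right _ (mul_pos hfactor hpos)

lemma exists_lt_forall_sum_norm_sub_maxSignedSum_le (hm : 2 ≤ m)
    (hω : ∀ σ : Fin m → ℤˣ, ∑ k, σ k • Complex.exp (π / m * Complex.I) ^ (k : ℕ) ≠ 0) :
    ∃ b, 0 < b ∧ b < 1 - 1 / reinhardtConst m ∧ ∀ z : Fin m → ℂ,
      ∑ j, ‖z j‖ - maxSignedSum z ≤ b * (∑ j, ‖z j‖ + ‖∑ j, z j‖) := by
  have hT := one_lt_reinhardtConst hm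
  have hsum_smul (c : ℝ) (z : Fin m → ℂ) (hc : 0 ≤ c) :
      ∑ j, ‖(c • z) j‖ = c * ∑ j, ‖z j‖ := by
    simp only [Pi.smul_apply, norm_smul, Real.norm_of_nonneg hc, Finset.mul_sum]
  refine exists_lt_forall_le_mul_of_homogeneous
    (u := fun z : Fin m → ℂ => ∑ j, ‖z j‖ - maxSignedSum z)
    (v := fun z => ∑ j, ‖z j‖ + ‖∑ j, z j‖) (.sub (by fun_prop) continuous_maxSignedSum)
    (by fun_prop) (fun c z hc => ?_) (fun c z hc => ?_) (fun z hz => ?_)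
    (sub_pos.mpr ((div_lt_one (one_pos.trans hT)).mpr hT))
    (fun z hz => sum_norm_sub_maxSignedSum_lt hm hω hz)
  · rw [hsum_smul c z hc, maxSignedSum_smul hc, mul_sub]
  · rw [hsum_smul c z hc, mul_add]
    simp only [Pi.smul_apply, ← Finset.smul_sum, norm_smul, Real.norm_of_nonneg hc]
  · obtain ⟨i, hi⟩ := Function.ne_iff.mp hz
    exact add_pos_of_pos_of_nonneg (Finset.sum_pos' (fun j _ => norm_nonneg (z j))
      ⟨i, Finset.mem_univ i, norm_pos_iff.mpr hi⟩) (norm_nonneg _)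

end SignedSumDeficit

section ComplexSquare

lemma csq_repr (z : ℂ) :
    csq (Complex.orthonormalBasisOneI.repr z) = Complex.orthonormalBasisOneI.repr (z ^ 2) := by
  ext i
  fin_cases i
  · simp [csq, toFun2, vec2, pow_two]
  · suffices 2 * z.re * z.im = z.re * z.im + z.im * z.re by
      simpa [csq, toFun2, vec2, pow_two]
    ring

lemma norm_csq (v : E2) : ‖csq v‖ = ‖v‖ ^ 2 := by
  obtain ⟨z, rfl⟩ := Complex.orthonormalBasisOneI.repr.surjective v
  rw [csq_repr, LinearIsometryEquiv.norm_map, LinearIsometryEquiv.norm_map, norm_pow]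

lemma csq_surjective : Function.Surjective csq := by
  intro V
  obtain ⟨z, rfl⟩ := Complex.orthonormalBasisOneI.repr.surjective V
  obtain ⟨w, rfl⟩ := IsAlgClosed.exists_pow_nat_eq z two_pos
  exact ⟨Complex.orthonormalBasisOneI.repr w, csq_repr w⟩

lemma exists_norm_eq_one_csq_eq {V : E2} (hV : ‖V‖ = 1) : ∃ u : E2, ‖u‖ = 1 ∧ csq u = V := by
  obtain ⟨u, rfl⟩ := csq_surjective V
  rw [norm_csq, pow_eq_one_iff_of_nonneg (norm_nonneg u) two_ne_zero] at hV
  exact ⟨u, hV, rfl⟩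

/-- The double-angle formula `2 cos² θ = 1 + cos 2θ`. -/
lemma two_mul_inner_sq (a u : E2) :
    2 * ⟪a, u⟫ ^ 2 = ‖csq a‖ * ‖csq u‖ + ⟪csq a, csq u⟫ := by
  rw [norm_csq, norm_csq, EuclideanSpace.real_norm_sq_eq, EuclideanSpace.real_norm_sq_eq]
  simp only [PiLp.inner_apply, RCLike.inner_apply, ringHom_apply, Fin.sum_univ_two, csq, vec2,
    toFun2, WithLp.equiv_apply, WithLp.equiv_symm_apply, Matrix.cons_val_zero, Matrix.cons_val_one,
    Matrix.cons_val_fin_one]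
  ring

end ComplexSquare

section LipschitzConstants

variable {m : ℕ} (a : Fin m → E2)

lemma norm_PhiMap_sub_sq (x y : E2) :
    ‖PhiMap a x - PhiMap a y‖ ^ 2 = ∑ j, (|⟪a j, x⟫| - |⟪a j, y⟫|) ^ 2 := by
  simp [EuclideanSpace.norm_sq_eq, PhiMap]

lemma sq_abs_inner_sub_abs_inner_le_sub {E : Type*} [NormedAddCommGroup E]
    [InnerProductSpace ℝ E] (a x y : E) : (|⟪a, x⟫| - |⟪a, y⟫|) ^ 2 ≤ ⟪a, x - y⟫ ^ 2 := by
  rw [inner_sub_right]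
  exact sq_le_sq.mpr (abs_abs_sub_abs_le_abs_sub _ _)

lemma sq_abs_inner_sub_abs_inner_le_add {E : Type*} [NormedAddCommGroup E]
    [InnerProductSpace ℝ E] (a x y : E) : (|⟪a, x⟫| - |⟪a, y⟫|) ^ 2 ≤ ⟪a, x + y⟫ ^ 2 := by
  simpa only [inner_neg_right, abs_neg, sub_neg_eq_add] using
    sq_abs_inner_sub_abs_inner_le_sub a x (-y)

lemma two_mul_sq_abs_inner_sub_abs_inner_le {x y : E2} (hnorm : ‖csq (x + y)‖ = 1)
    (hcsq : csq (x - y) = -csq (x + y)) (ε : ℤˣ) (a : E2) :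
    2 * (|⟪a, x⟫| - |⟪a, y⟫|) ^ 2 ≤ ‖csq a‖ - ⟪ε • csq a, csq (x + y)⟫ := by
  have hle_sub := sq_abs_inner_sub_abs_inner_le_sub a x y
  have hle_add := sq_abs_inner_sub_abs_inner_le_add a x y
  have hsq_add := two_mul_inner_sq a (x + y)
  have hsq_sub := two_mul_inner_sq a (x - y)
  rw [hnorm, mul_one] at hsq_add
  rw [hcsq, norm_neg, hnorm, mul_one, inner_neg_right] at hsq_sub
  rw [inner_units_smul_left]
  rcases Int.units_eq_one_or ε with rfl | rfl
  · rw [one_smul]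
    linarith
  · rw [Units.neg_smul, one_smul]
    linarith

lemma pdist_nonneg (x y : E2) : 0 ≤ pdist x y := le_min (norm_nonneg _) (norm_nonneg _)

lemma nonneg_of_mem_ratioSet {r : ℝ} (hr : r ∈ ratioSet a) : 0 ≤ r := by
  obtain ⟨x, y, -, rfl⟩ := hr
  exact div_nonneg (norm_nonneg _) (pdist_nonneg x y)

lemma lipL_nonneg : 0 ≤ lipL a := Real.sInf_nonneg fun _ => nonneg_of_mem_ratioSet a

lemma lipU_nonneg : 0 ≤ lipU a := Real.sSup_nonneg fun _ => nonneg_of_mem_ratioSet a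

lemma norm_PhiMap_sub_mem_ratioSet {x y : E2} (h : pdist x y = 1) :
    ‖PhiMap a x - PhiMap a y‖ ∈ ratioSet a :=
  ⟨x, y, h ▸ one_ne_zero, by rw [h, div_one]⟩

lemma norm_PhiMap_sub_le (x y : E2) :
    ‖PhiMap a x - PhiMap a y‖ ≤ √(∑ j, ‖a j‖ ^ 2) * pdist x y := by
  have hcs (v : E2) (j : Fin m) : ⟪a j, v⟫ ^ 2 ≤ ‖a j‖ ^ 2 * ‖v‖ ^ 2 := by
    rw [← mul_pow]
    exact sq_le_sq.mpr ((abs_real_inner_le_norm _ _).trans (le_abs_self _))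
  refine le_of_sq_le_sq ?_ (mul_nonneg (Real.sqrt_nonneg _) (pdist_nonneg x y))
  rw [norm_PhiMap_sub_sq, mul_pow, Real.sq_sqrt (by positivity), Finset.sum_mul]
  refine Finset.sum_le_sum fun j _ => ?_
  rcases min_choice ‖x - y‖ ‖x + y‖ with hmin | hmin <;> rw [pdist, hmin]
  · exact (sq_abs_inner_sub_abs_inner_le_sub _ x y).trans (hcs _ j)
  · exact (sq_abs_inner_sub_abs_inner_le_add _ x y).trans (hcs _ j)

lemma bddAbove_ratioSet : BddAbove (ratioSet a) := by
  refine ⟨√(∑ j, ‖a j‖ ^ 2), ?_⟩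
  rintro r ⟨x, y, -, rfl⟩
  exact div_le_of_le_mul₀ (pdist_nonneg x y) (Real.sqrt_nonneg _) (norm_PhiMap_sub_le a x y)

lemma lipL_le_norm_PhiMap_sub {x y : E2} (h : pdist x y = 1) :
    lipL a ≤ ‖PhiMap a x - PhiMap a y‖ :=
  csInf_le ⟨0, fun _ => nonneg_of_mem_ratioSet a⟩ (norm_PhiMap_sub_mem_ratioSet a h)

lemma norm_PhiMap_sub_le_lipU {x y : E2} (h : pdist x y = 1) :
    ‖PhiMap a x - PhiMap a y‖ ≤ lipU a :=
  le_csSup (bddAbove_ratioSet a) (norm_PhiMap_sub_mem_ratioSet a h)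

lemma two_mul_lipL_sq_le : 2 * lipL a ^ 2 ≤
    ∑ j, ‖csq (a j)‖ - maxSignedSum fun j => csq (a j) := by
  obtain ⟨ε, hε⟩ := exists_norm_sum_units_smul_eq_maxSignedSum fun j => csq (a j)
  obtain ⟨V, hV, hinner⟩ := exists_norm_eq_one_inner_eq_norm (∑ j, ε j • csq (a j))
  obtain ⟨u, hu, rfl⟩ := exists_norm_eq_one_csq_eq hV
  obtain ⟨u', hu', hcsq⟩ := exists_norm_eq_one_csq_eq (V := -csq u) (by rwa [norm_neg])
  obtain ⟨x, y, rfl, rfl⟩ : ∃ x y : E2, x + y = u ∧ x - y = u' :=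
    ⟨(2⁻¹ : ℝ) • (u + u'), (2⁻¹ : ℝ) • (u - u'), by module, by module⟩
  have hdist : pdist x y = 1 := by rw [pdist, hu, hu', min_self]
  calc 2 * lipL a ^ 2 ≤ 2 * ‖PhiMap a x - PhiMap a y‖ ^ 2 := by
        gcongr
        exacts [lipL_nonneg a, lipL_le_norm_PhiMap_sub a hdist]
    _ = ∑ j, 2 * (|⟪a j, x⟫| - |⟪a j, y⟫|) ^ 2 := by rw [norm_PhiMap_sub_sq, Finset.mul_sum]
    _ ≤ ∑ j, (‖csq (a j)‖ - ⟪ε j • csq (a j), csq (x + y)⟫) :=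
        Finset.sum_le_sum fun j _ =>
          two_mul_sq_abs_inner_sub_abs_inner_le hV hcsq (ε j) (a j)
    _ = _ := by rw [Finset.sum_sub_distrib, ← sum_inner, hinner, hε]

lemma le_two_mul_lipU_sq :
    ∑ j, ‖csq (a j)‖ + ‖∑ j, csq (a j)‖ ≤ 2 * lipU a ^ 2 := by
  obtain ⟨V, hV, hinner⟩ := exists_norm_eq_one_inner_eq_norm (∑ j, csq (a j))
  obtain ⟨u, hu, rfl⟩ := exists_norm_eq_one_csq_eq hV
  have hdist : pdist u 0 = 1 := by rw [pdist, sub_zero, add_zero, hu, min_self]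
  calc ∑ j, ‖csq (a j)‖ + ‖∑ j, csq (a j)‖
      = ∑ j, 2 * ⟪a j, u⟫ ^ 2 := by
        simp only [two_mul_inner_sq, hV, mul_one, Finset.sum_add_distrib, ← sum_inner, hinner]
    _ = 2 * ‖PhiMap a u - PhiMap a 0‖ ^ 2 := by
        simp only [norm_PhiMap_sub_sq, inner_zero_right, abs_zero, sub_zero, sq_abs,
          Finset.mul_sum]
    _ ≤ 2 * lipU a ^ 2 := by
        gcongr
        exact norm_PhiMap_sub_le_lipU a hdist

variable {a}

lemma rpow_neg_half_le_condNum {b : ℝ} (hb : 0 < b) (h : lipL a ^ 2 ≤ b * lipU a ^ 2) :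
    ENNReal.ofReal b ^ (-(1 / 2) : ℝ) ≤ condNum a := by
  rw [condNum]
  split_ifs with hL
  · exact le_top
  have hL_pos : 0 < lipL a := (lipL_nonneg a).lt_of_ne' hL
  have hle : lipL a ≤ √b * lipU a := by
    rw [← abs_of_nonneg (lipL_nonneg a), ← Real.sqrt_sq_eq_abs]
    refine (Real.sqrt_le_sqrt h).trans_eq ?_
    rw [Real.sqrt_mul hb.le, Real.sqrt_sq (lipU_nonneg a)]
  rw [ENNReal.ofReal_rpow_of_pos hb, Real.rpow_neg hb.le, ← Real.sqrt_eq_rpow]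
  refine ENNReal.ofReal_le_ofReal ?_
  rwa [le_div_iff₀ hL_pos, inv_mul_le_iff₀ (Real.sqrt_pos.mpr hb)]

end LipschitzConstants

lemma lt_iInf_condNum {m : ℕ} (hm : 2 ≤ m)
    (hω : ∀ σ : Fin m → ℤˣ, ∑ k, σ k • Complex.exp (π / m * Complex.I) ^ (k : ℕ) ≠ 0) :
    ENNReal.ofReal (1 - 1 / reinhardtConst m) ^ (-(1 / 2) : ℝ) <
      ⨅ A : Fin m → E2, condNum A := by
  obtain ⟨b, hb, hb_lt, hle⟩ := exists_lt_forall_sum_norm_sub_maxSignedSum_le hm hω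
  have hstrict : ENNReal.ofReal (1 - 1 / reinhardtConst m) ^ (-(1 / 2) : ℝ) <
      ENNReal.ofReal b ^ (-(1 / 2) : ℝ) := by
    rw [ENNReal.ofReal_rpow_of_pos hb, ENNReal.ofReal_rpow_of_pos (hb.trans hb_lt),
      ENNReal.ofReal_lt_ofReal_iff (Real.rpow_pos_of_pos hb _)]
    exact Real.rpow_lt_rpow_of_neg hb hb_lt (by norm_num)
  refine hstrict.trans_le (le_iInf fun A => rpow_neg_half_le_condNum hb ?_)
  let toComplex : E2 →ₗᵢ[ℝ] ℂ := Complex.orthonormalBasisOneI.repr.symm.toLinearIsometry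
  have hA := hle fun j => toComplex (csq (A j))
  simp only [← map_sum, LinearIsometry.norm_map] at hA
  rw [maxSignedSum_map toComplex fun j => csq (A j)] at hA
  have hU := mul_le_mul_of_nonneg_left (le_two_mul_lipU_sq A) hb.le
  linarith [two_mul_lipL_sq_le A]

lemma isPrimitiveRoot_exp_pi_div {n : ℕ} (hn : n ≠ 0) :
    IsPrimitiveRoot (Complex.exp (π / n * Complex.I)) (2 * n) := by
  convert Complex.isPrimitiveRoot_exp (2 * n) (mul_ne_zero two_ne_zero hn) using 2
  push_cast
  field_simp

/-- If `m = 2^s` with `s ≥ 2`, then every `A ∈ ℝ^{m×2}` has condition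
number strictly greater than `(1 − 1/(m·sin(π/(2m))))^{−1/2}`; in particular the minimal
condition number is strictly greater than this bound. -/
theorem stmt8 {s : ℕ} (hs : 2 ≤ s) {m : ℕ} (hm : m = 2 ^ s) :
    (∀ A : Fin m → E2,
      ENNReal.ofReal (1 - 1 / (m * Real.sin (π / (2 * m)))) ^ (-(1 / 2) : ℝ) < condNum A) ∧
    ENNReal.ofReal (1 - 1 / (m * Real.sin (π / (2 * m)))) ^ (-(1 / 2) : ℝ) <
      ⨅ A : Fin m → E2, condNum A := by
  subst hm
  have hroot : IsPrimitiveRoot (Complex.exp (π / (2 ^ s : ℕ) * Complex.I)) (2 ^ (s + 1)) :=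
    pow_succ' 2 s ▸ isPrimitiveRoot_exp_pi_div (by positivity)
  have hinf := lt_iInf_condNum (Nat.le_self_pow (by omega) 2) (sum_units_smul_pow_ne_zero hroot)
  exact ⟨fun A => hinf.trans_le (iInf_le _ A), hinf⟩
end
end

section
/- For every even integer m ≥ 4, the harmonic frame E_m does not have minimal condition number: there exists a matrix A ∈ ℝ^{m×2} with β_A < β_{E_m}. (This disproves the conjecture of Xia, Xu and Xu that β_{E_m} = min_{A ∈ ℝ^{m×2}} β_A for even m ≥ 4.) -/
noncomputable section

open Real
open scoped RealInnerProductSpace ENNReal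

/-!
In the coordinates `u = x + y`, `v = x - y` one has `dist(x, y) = min ‖u‖ ‖v‖` and
`‖Φ_A(x) - Φ_A(y)‖² = ∑ j, min ⟨a_j, u⟩² ⟨a_j, v⟩²`. For a tight frame of `m` unit vectors with
angles `θ_j` this gives `U_A² = m / 2`, and `cos² α - cos² β = -sin (α - β) sin (α + β)` gives
`L_A² = (m - M) / 2`, where `M = max_c ∑ j, |cos (2θ_j + c)|` is twice the diameter of the polygon
whose unit edges have angles `2θ_j`. Hence `β_A = (1 - M / m)^(-1/2)`.

For `E_n` that polygon is the regular `n`-gon. If `n` is odd, it has the same diameter-to-perimeter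
ratio as the regular `2n`-gon, so an even `n` behaves like `n / 2` does among the odd ones. This
ratio decreases strictly with the number of sides because `sin` is strictly concave on `[0, π]`, so
`E_{m-1}`, completed by a zero row, has a smaller condition number than `E_m`.
-/

lemma sum_range_mul_of_coprime {M : Type*} [AddCommMonoid M] {f : ℕ → M} {n a : ℕ}
    (hf : Function.Periodic f n) (ha : n.Coprime a) :
    ∑ i ∈ Finset.range n, f (a * i) = ∑ i ∈ Finset.range n, f i := by
  have hinj : Set.InjOn (fun i => a * i % n) (Finset.range n) := fun i hi j hj hij =>
    (Nat.ModEq.cancel_left_of_coprime ha hij).eq_of_lt_of_lt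
      (Finset.mem_range.1 hi) (Finset.mem_range.1 hj)
  have hmaps : Set.MapsTo (fun i => a * i % n) (Finset.range n) (Finset.range n) := fun i hi =>
    Finset.mem_coe.2 (Finset.mem_range.2 (Nat.mod_lt _ (Nat.zero_lt_of_lt (Finset.mem_range.1 hi))))
  exact Finset.sum_nbij _ hmaps hinj (Finset.surjOn_of_injOn_of_card_le _ hmaps hinj le_rfl)
    fun i _ => (hf.map_mod_nat (a * i)).symm

lemma sum_cos_two_pi_div {n : ℕ} (hn : 1 < n) (c : ℝ) :
    ∑ i ∈ Finset.range n, cos (2 * π / n * i + c) = 0 := by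
  have hn' : (1 : ℝ) < n := mod_cast hn
  have hsin : 0 < sin (2 * π / n / 2) := by
    rw [div_right_comm, mul_div_cancel_left₀ _ two_ne_zero]
    exact sin_pos_of_pos_of_lt_pi (by positivity) (div_lt_self pi_pos hn')
  have hsum := Real.sin_mul_sum_cos n (2 * π / n) c
  rw [show n * (2 * π / n) / 2 = π by field_simp, sin_pi, zero_mul] at hsum
  exact (mul_eq_zero.1 hsum).resolve_left hsin.ne'

/-- The sum of `|cos|` over `n` equally spaced angles of a half turn starting at `c`, which is the
width in the direction of angle `-c` of the regular `2n`-gon with unit sides. -/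
def absCosSum (n : ℕ) (c : ℝ) : ℝ := ∑ i ∈ Finset.range n, |cos (π / n * i + c)|

lemma periodic_abs_cos_pi_div {n : ℕ} (hn : n ≠ 0) (c : ℝ) :
    Function.Periodic (fun i : ℕ => |cos (π / n * i + c)|) n := fun i => by
  simp only [Nat.cast_add, mul_add, div_mul_cancel₀ π (Nat.cast_ne_zero.2 hn), add_right_comm,
    cos_add_pi, abs_neg]

lemma periodic_absCosSum {n : ℕ} (hn : n ≠ 0) : Function.Periodic (absCosSum n) (π / n) := by
  intro c
  have hshift : absCosSum n (c + π / n) =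
      ∑ i ∈ Finset.range n, |cos (π / n * (i + 1 : ℕ) + c)| :=
    Finset.sum_congr rfl fun i _ => by push_cast; ring_nf
  have hends : |cos (π / n * n + c)| = |cos (π / n * (0 : ℕ) + c)| := by
    simpa using periodic_abs_cos_pi_div hn c 0
  rw [hshift, absCosSum, ← add_left_inj |cos (π / n * (0 : ℕ) + c)|,
    ← Finset.sum_range_succ' (fun i : ℕ => |cos (π / n * i + c)|), Finset.sum_range_succ, hends]

lemma sin_mul_absCosSum {n : ℕ} {c : ℝ} (hn : n ≠ 0)
    (hc : c ∈ Set.Icc (-(π / 2)) (-(π / 2) + π / n)) :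
    sin (π / (2 * n)) * absCosSum n c = sin (π / (2 * n) - c) := by
  have : (0 : ℝ) < n := by positivity
  have hsum := Real.sin_mul_sum_cos n (π / n) c
  rw [show π / n / 2 = π / (2 * n) by ring, show n * (π / n) / 2 = π / 2 by field_simp,
    sin_pi_div_two, one_mul,
    show (n - 1) * (π / n) / 2 + c = π / 2 - (π / (2 * n) - c) by field_simp; ring,
    cos_pi_div_two_sub] at hsum
  rw [← hsum, absCosSum]
  congr 1
  refine Finset.sum_congr rfl fun i hi => abs_of_nonneg (cos_nonneg_of_mem_Icc ⟨?_, ?_⟩)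
  · exact hc.1.trans (le_add_of_nonneg_left (by positivity))
  · have hi' : (i : ℝ) + 1 ≤ n := mod_cast Finset.mem_range.1 hi
    calc π / n * i + c ≤ π / n * (i + 1) - π / 2 := by linarith [hc.2]
      _ ≤ π / n * n - π / 2 := by gcongr
      _ = π / 2 := by field_simp; ring

lemma isGreatest_absCosSum {n : ℕ} (hn : n ≠ 0) :
    IsGreatest (Set.range (absCosSum n)) (1 / sin (π / (2 * n))) := by
  have hn' : (1 : ℝ) ≤ n := mod_cast Nat.one_le_iff_ne_zero.2 hn
  have hsin : 0 < sin (π / (2 * n)) :=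
    sin_pos_of_pos_of_lt_pi (by positivity) (div_lt_self pi_pos (by linarith))
  have hpos : 0 < π / n := by positivity
  have hhalf : π / (2 * n) = π / n / 2 := by ring
  constructor
  · refine ⟨π / (2 * n) - π / 2, eq_one_div_of_mul_eq_one_right ?_⟩
    rw [sin_mul_absCosSum hn ⟨by linarith, by linarith⟩, sub_sub_cancel, sin_pi_div_two]
  · rintro _ ⟨c, rfl⟩
    obtain ⟨c', hc', hcc'⟩ := (periodic_absCosSum hn).exists_mem_Ico hpos c (-(π / 2))
    rw [hcc', le_div_iff₀' hsin, sin_mul_absCosSum hn ⟨hc'.1, hc'.2.le⟩]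
    exact sin_le_one _

lemma sum_abs_cos_two_pi_div_of_odd {n : ℕ} (hn : Odd n) (c : ℝ) :
    ∑ i ∈ Finset.range n, |cos (2 * π / n * i + c)| = absCosSum n c := by
  rw [absCosSum, ← sum_range_mul_of_coprime (periodic_abs_cos_pi_div hn.pos.ne' c)
    (Nat.coprime_two_right.2 hn)]
  refine Finset.sum_congr rfl fun i _ => ?_
  push_cast
  ring_nf

lemma sum_abs_cos_two_pi_div_two_mul {k : ℕ} (hk : k ≠ 0) (c : ℝ) :
    ∑ i ∈ Finset.range (2 * k), |cos (2 * π / (2 * k : ℕ) * i + c)| = 2 * absCosSum k c := by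
  have hangle : 2 * π / (2 * k : ℕ) = π / k := by push_cast; field_simp
  have hperiodic (i : ℕ) := periodic_abs_cos_pi_div hk c i
  simp only [add_comm _ k] at hperiodic
  rw [hangle, two_mul k, Finset.sum_range_add (fun i : ℕ => |cos (π / k * i + c)|)]
  simp only [hperiodic]
  rw [← two_mul, absCosSum]

/-- The diameter-to-perimeter ratio of the regular `2t`-gon, extended to real `t`: with unit sides,
the perimeter is `2t` and the diameter is `1 / sin (π / (2t))`. It governs the condition numbers of
the harmonic frames. -/
def diamPerimRatio (t : ℝ) : ℝ := 1 / (2 * (t * sin (π / (2 * t))))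

lemma diamPerimRatio_one : diamPerimRatio 1 = 1 / 2 := by
  simp [diamPerimRatio]

lemma diamPerimRatio_strictAntiOn : StrictAntiOn diamPerimRatio (Set.Ici 1) := by
  intro s hs t ht hst
  have hs0 : 0 < s := zero_lt_one.trans_le hs
  have ht0 : 0 < t := zero_lt_one.trans_le ht
  have hangle {r : ℝ} (hr : 1 ≤ r) : 0 < π / (2 * r) ∧ π / (2 * r) < π :=
    ⟨by positivity, div_lt_self pi_pos (by linarith)⟩
  have hmem {r : ℝ} (hr : 1 ≤ r) : π / (2 * r) ∈ Set.Icc 0 π :=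
    ⟨(hangle hr).1.le, (hangle hr).2.le⟩
  have hsecant := strictConcaveOn_sin_Icc.secant_strict_mono (a := 0) ⟨le_rfl, pi_pos.le⟩
    (hmem ht) (hmem hs) (hangle ht).1.ne' (hangle hs).1.ne' (by gcongr)
  simp only [sin_zero, sub_zero] at hsecant
  have hscale {r : ℝ} (hr : 0 < r) :
      sin (π / (2 * r)) / (π / (2 * r)) = 2 * (r * sin (π / (2 * r))) / π := by
    field_simp
  rw [hscale hs0, hscale ht0, div_lt_div_iff_of_pos_right pi_pos] at hsecant
  have := sin_pos_of_pos_of_lt_pi (hangle hs).1 (hangle hs).2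
  exact one_div_lt_one_div_of_lt (by positivity) hsecant

section LipschitzConstants

variable {m : ℕ} (a : Fin m → E2)

/-- The quantity `∑ j, min ⟨a_j, u⟩² ⟨a_j, v⟩²`, which is `‖Φ_A(x) - Φ_A(y)‖²` in the coordinates
`u = x + y` and `v = x - y`. -/
def minEnergy (u v : E2) : ℝ := ∑ j, min (⟪a j, u⟫ ^ 2) (⟪a j, v⟫ ^ 2)

lemma sq_abs_sub_abs (x y : ℝ) : (|x| - |y|) ^ 2 = min ((x + y) ^ 2) ((x - y) ^ 2) := by
  rw [inf_eq_half_smul_add_sub_abs_sub' ℝ,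
    show (x - y) ^ 2 - (x + y) ^ 2 = -4 * (x * y) by ring, abs_mul, abs_mul, sub_sq, sq_abs, sq_abs,
    smul_eq_mul]
  norm_num
  ring

lemma norm_phiMap_sub_sq (x y : E2) :
    ‖PhiMap a x - PhiMap a y‖ ^ 2 = minEnergy a (x + y) (x - y) := by
  simp [EuclideanSpace.norm_sq_eq, PhiMap, minEnergy, sq_abs_sub_abs, inner_add_right,
    inner_sub_right]

lemma mem_ratioSet_iff {r : ℝ} :
    r ∈ ratioSet a ↔ ∃ u v : E2, u ≠ 0 ∧ v ≠ 0 ∧ r = √(minEnergy a u v) / min ‖u‖ ‖v‖ := by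
  have hnorm (x y : E2) : ‖PhiMap a x - PhiMap a y‖ = √(minEnergy a (x + y) (x - y)) := by
    rw [← norm_phiMap_sub_sq, sqrt_sq (norm_nonneg _)]
  have hpdist (x y : E2) : pdist x y ≠ 0 ↔ x + y ≠ 0 ∧ x - y ≠ 0 := by
    rw [← norm_pos_iff (a := x + y), ← norm_pos_iff (a := x - y), ← lt_min_iff, min_comm]
    exact (le_min (norm_nonneg _) (norm_nonneg _)).lt_iff_ne'.symm
  constructor
  · rintro ⟨x, y, hxy, rfl⟩
    exact ⟨x + y, x - y, ((hpdist x y).1 hxy).1, ((hpdist x y).1 hxy).2, by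
      rw [hnorm, pdist, min_comm]⟩
  · rintro ⟨u, v, hu, hv, rfl⟩
    have hadd : (2⁻¹ : ℝ) • (u + v) + (2⁻¹ : ℝ) • (u - v) = u := by module
    have hsub : (2⁻¹ : ℝ) • (u + v) - (2⁻¹ : ℝ) • (u - v) = v := by module
    refine ⟨(2⁻¹ : ℝ) • (u + v), (2⁻¹ : ℝ) • (u - v), (hpdist _ _).2 ?_, ?_⟩
    · rw [hadd, hsub]
      exact ⟨hu, hv⟩
    · rw [hnorm, pdist, hadd, hsub, min_comm ‖u‖]

lemma sqrt_minEnergy_mem_ratioSet {u v : E2} (hu : ‖u‖ = 1) (hv : ‖v‖ = 1) :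
    √(minEnergy a u v) ∈ ratioSet a :=
  (mem_ratioSet_iff a).2 ⟨u, v, norm_ne_zero_iff.1 (hu ▸ one_ne_zero),
    norm_ne_zero_iff.1 (hv ▸ one_ne_zero), by rw [hu, hv, min_self, div_one]⟩

lemma sq_min_mul_minEnergy_le {r s : ℝ} (hr : 0 ≤ r) (hs : 0 ≤ s) (u v : E2) :
    min r s ^ 2 * minEnergy a u v ≤ minEnergy a (r • u) (s • v) := by
  have : 0 ≤ min r s := le_min hr hs
  rw [minEnergy, minEnergy, Finset.mul_sum]
  gcongr with j
  rw [real_inner_smul_right, real_inner_smul_right, mul_pow, mul_pow,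
    mul_min_of_nonneg _ _ (sq_nonneg _)]
  gcongr
  exacts [min_le_left _ _, min_le_right _ _]

variable {a}

lemma lipL_eq_sqrt {c : ℝ}
    (hc : IsLeast {s | ∃ u v : E2, ‖u‖ = 1 ∧ ‖v‖ = 1 ∧ minEnergy a u v = s} c) :
    lipL a = √c := by
  obtain ⟨⟨u₀, v₀, hu₀, hv₀, rfl⟩, hle⟩ := hc
  refine IsLeast.csInf_eq ⟨sqrt_minEnergy_mem_ratioSet a hu₀ hv₀, fun r hr => ?_⟩
  obtain ⟨u, v, hu, hv, rfl⟩ := (mem_ratioSet_iff a).1 hr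
  have hmin : 0 < min ‖u‖ ‖v‖ := lt_min (norm_pos_iff.2 hu) (norm_pos_iff.2 hv)
  rw [le_div_iff₀ hmin, ← sqrt_sq hmin.le, ← sqrt_mul' _ (sq_nonneg _), mul_comm]
  refine sqrt_le_sqrt ?_
  calc min ‖u‖ ‖v‖ ^ 2 * minEnergy a u₀ v₀
      ≤ min ‖u‖ ‖v‖ ^ 2 * minEnergy a (‖u‖⁻¹ • u) (‖v‖⁻¹ • v) := by
        gcongr
        exact hle ⟨_, _, norm_smul_inv_norm (𝕜 := ℝ) hu, norm_smul_inv_norm (𝕜 := ℝ) hv, rfl⟩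
    _ ≤ minEnergy a (‖u‖ • ‖u‖⁻¹ • u) (‖v‖ • ‖v‖⁻¹ • v) :=
        sq_min_mul_minEnergy_le a (norm_nonneg u) (norm_nonneg v) _ _
    _ = minEnergy a u v := by
        rw [smul_inv_smul₀ (norm_ne_zero_iff.2 hu), smul_inv_smul₀ (norm_ne_zero_iff.2 hv)]

lemma lipU_eq_sqrt_of_tight {C : ℝ} (ha : ∀ u : E2, ∑ j, ⟪a j, u⟫ ^ 2 = C * ‖u‖ ^ 2) :
    lipU a = √C := by
  obtain ⟨u₀, hu₀⟩ := exists_norm_eq E2 zero_le_one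
  have hmem := sqrt_minEnergy_mem_ratioSet a hu₀ hu₀
  simp only [minEnergy, min_self, ha, hu₀, one_pow, mul_one] at hmem
  refine IsGreatest.csSup_eq ⟨hmem, fun r hr => ?_⟩
  obtain ⟨u, v, hu, hv, rfl⟩ := (mem_ratioSet_iff a).1 hr
  have hsqrt (w : E2) : √(∑ j, ⟪a j, w⟫ ^ 2) = √C * ‖w‖ := by
    rw [ha, sqrt_mul' _ (sq_nonneg _), sqrt_sq (norm_nonneg _)]
  rw [div_le_iff₀ (lt_min (norm_pos_iff.2 hu) (norm_pos_iff.2 hv)),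
    mul_min_of_nonneg _ _ (sqrt_nonneg C), ← hsqrt, ← hsqrt]
  exact le_min (sqrt_le_sqrt (Finset.sum_le_sum fun _ _ => min_le_left _ _))
    (sqrt_le_sqrt (Finset.sum_le_sum fun _ _ => min_le_right _ _))

lemma condNum_eq_inv (hU : 0 < lipU a) :
    condNum a = (ENNReal.ofReal (lipL a / lipU a))⁻¹ := by
  have hL : 0 ≤ lipL a := Real.sInf_nonneg fun r ⟨x, y, _, hr⟩ =>
    hr ▸ div_nonneg (norm_nonneg _) (le_min (norm_nonneg _) (norm_nonneg _))
  rw [condNum]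
  split_ifs with hL0
  · simp [hL0]
  · have hL' : 0 < lipL a := hL.lt_of_ne' hL0
    rw [← ENNReal.ofReal_inv_of_pos (div_pos hL' hU), inv_div]

variable (a) in
lemma condNum_snoc_zero : condNum (Fin.snoc a 0 : Fin (m + 1) → E2) = condNum a := by
  have hratio : ratioSet (Fin.snoc a 0 : Fin (m + 1) → E2) = ratioSet a := by
    ext r
    simp [mem_ratioSet_iff, minEnergy, Fin.sum_univ_castSucc]
  rw [condNum, condNum, lipL, lipL, lipU, lipU, hratio]

end LipschitzConstants

section UnitFrames

/-- The unit vector at angle `t`; frames of unit vectors are described by their angles. -/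
def unitVec (t : ℝ) : E2 := vec2 (cos t) (sin t)

lemma inner_unitVec (s t : ℝ) : ⟪unitVec s, unitVec t⟫ = cos (s - t) := by
  simp [unitVec, vec2, PiLp.inner_apply, Fin.sum_univ_two, cos_sub, mul_comm]

lemma norm_unitVec (t : ℝ) : ‖unitVec t‖ = 1 := by
  simp [unitVec, vec2, EuclideanSpace.norm_eq, Fin.sum_univ_two]

lemma exists_unitVec_eq {u : E2} (hu : ‖u‖ = 1) : ∃ t, unitVec t = u := by
  have hnorm : ‖(⟨u 0, u 1⟩ : ℂ)‖ = 1 := by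
    rw [← hu, Complex.norm_eq_sqrt_sq_add_sq, EuclideanSpace.norm_eq]
    simp [Fin.sum_univ_two]
  obtain ⟨t, ht⟩ := (Complex.norm_eq_one_iff _).1 hnorm
  refine ⟨t, ?_⟩
  ext i
  fin_cases i
  · simpa [unitVec, vec2, Complex.exp_ofReal_mul_I_re] using congrArg Complex.re ht
  · simpa [unitVec, vec2, Complex.exp_ofReal_mul_I_im] using congrArg Complex.im ht

lemma exists_eq_norm_smul_unitVec (u : E2) : ∃ t, u = ‖u‖ • unitVec t := by
  rcases eq_or_ne u 0 with rfl | hu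
  · exact ⟨0, by simp⟩
  · obtain ⟨t, ht⟩ := exists_unitVec_eq (norm_smul_inv_norm (𝕜 := ℝ) hu)
    exact ⟨t, by simp [ht, hu]⟩

variable {m : ℕ} {θ : Fin m → ℝ} {M : ℝ}

lemma sum_inner_unitVec_sq (hθ : ∀ c, ∑ j, cos (2 * θ j + c) = 0) (u : E2) :
    ∑ j, ⟪unitVec (θ j), u⟫ ^ 2 = m / 2 * ‖u‖ ^ 2 := by
  obtain ⟨t, ht⟩ := exists_eq_norm_smul_unitVec u
  have hterm (j : Fin m) : ⟪unitVec (θ j), u⟫ ^ 2 =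
      (1 / 2 + cos (2 * θ j + -(2 * t)) / 2) * ‖u‖ ^ 2 := by
    conv_lhs => rw [ht, real_inner_smul_right, inner_unitVec, mul_pow, cos_sq, mul_sub]
    ring_nf
  simp only [hterm]
  rw [← Finset.sum_mul, Finset.sum_add_distrib,
    ← Finset.sum_div Finset.univ (fun j => cos (2 * θ j + -(2 * t))), hθ]
  simp [div_eq_mul_inv]

lemma cos_sq_sub_cos_sq (x y : ℝ) : cos x ^ 2 - cos y ^ 2 = -(sin (x - y) * sin (x + y)) := by
  rw [sin_add, sin_sub]
  linear_combination cos y ^ 2 * sin_sq_add_cos_sq x - cos x ^ 2 * sin_sq_add_cos_sq y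

lemma minEnergy_unitVec (hθ : ∀ c, ∑ j, cos (2 * θ j + c) = 0) (p q : ℝ) :
    minEnergy (fun j => unitVec (θ j)) (unitVec p) (unitVec q) =
      (m - |sin (p - q)| * ∑ j, |cos (2 * θ j + (-(p + q) - π / 2))|) / 2 := by
  have hterm (j : Fin m) : |cos (θ j - q) ^ 2 - cos (θ j - p) ^ 2| =
      |sin (p - q)| * |cos (2 * θ j + (-(p + q) - π / 2))| := by
    rw [cos_sq_sub_cos_sq, abs_neg, abs_mul, ← add_sub_assoc (2 * θ j), cos_sub_pi_div_two]
    ring_nf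
  have hsq (p : ℝ) : ∑ j, cos (θ j - p) ^ 2 = m / 2 := by
    simpa [inner_unitVec, norm_unitVec] using sum_inner_unitVec_sq hθ (unitVec p)
  simp only [minEnergy, inner_unitVec, inf_eq_half_smul_add_sub_abs_sub' ℝ, smul_eq_mul, hterm]
  rw [← Finset.mul_sum, Finset.sum_sub_distrib, Finset.sum_add_distrib, hsq, hsq, add_halves,
    Finset.mul_sum, inv_mul_eq_div]

lemma isLeast_minEnergy_unitVec (hθ : ∀ c, ∑ j, cos (2 * θ j + c) = 0)
    (hM : IsGreatest (Set.range fun c => ∑ j, |cos (2 * θ j + c)|) M) :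
    IsLeast {s | ∃ u v : E2, ‖u‖ = 1 ∧ ‖v‖ = 1 ∧ minEnergy (fun j => unitVec (θ j)) u v = s}
      ((m - M) / 2) := by
  obtain ⟨⟨c, rfl⟩, hle⟩ := hM
  constructor
  · refine ⟨unitVec (-c / 2), unitVec (-c / 2 - π / 2), norm_unitVec _, norm_unitVec _, ?_⟩
    have hphase : -(-c / 2 + (-c / 2 - π / 2)) - π / 2 = c := by ring
    rw [minEnergy_unitVec hθ, sub_sub_cancel, sin_pi_div_two, abs_one, one_mul, hphase]
  · rintro _ ⟨u, v, hu, hv, rfl⟩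
    obtain ⟨p, rfl⟩ := exists_unitVec_eq hu
    obtain ⟨q, rfl⟩ := exists_unitVec_eq hv
    rw [minEnergy_unitVec hθ]
    gcongr
    exact (mul_le_of_le_one_left (by positivity) (abs_sin_le_one _)).trans (hle ⟨_, rfl⟩)

lemma condNum_unitVec_of_isGreatest (hm : m ≠ 0) (hθ : ∀ c, ∑ j, cos (2 * θ j + c) = 0)
    (hM : IsGreatest (Set.range fun c => ∑ j, |cos (2 * θ j + c)|) M) :
    condNum (fun j => unitVec (θ j)) = (ENNReal.ofReal √(1 - M / m))⁻¹ := by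
  have hm' : (m : ℝ) ≠ 0 := Nat.cast_ne_zero.2 hm
  have hU := lipU_eq_sqrt_of_tight (sum_inner_unitVec_sq hθ)
  rw [condNum_eq_inv (hU ▸ by positivity), hU, lipL_eq_sqrt (isLeast_minEnergy_unitVec hθ hM),
    ← sqrt_div' _ (by positivity), div_div_div_cancel_right₀ two_ne_zero, sub_div, div_self hm']

end UnitFrames

lemma condNum_harmonicFrame_of_isGreatest {n : ℕ} (hn : 1 < n) {r : ℝ}
    (hr : IsGreatest (Set.range fun c => ∑ i ∈ Finset.range n, |cos (2 * π / n * i + c)|)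
      (n * r)) :
    condNum (harmonicFrame n) = (ENNReal.ofReal √(1 - r))⁻¹ := by
  have hn' : (n : ℝ) ≠ 0 := by positivity
  have hangle (j : ℕ) : 2 * (j * π / n) = 2 * π / n * j := by ring
  have hθ (c : ℝ) : ∑ j : Fin n, cos (2 * ((j : ℕ) * π / n) + c) = 0 := by
    simp only [hangle]
    rw [← sum_cos_two_pi_div hn c, Finset.sum_range]
  have := condNum_unitVec_of_isGreatest (θ := fun j : Fin n => (j : ℕ) * π / n) (by omega) hθ
    (M := n * r) (by simpa only [hangle, Finset.sum_range] using hr)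
  rwa [mul_div_cancel_left₀ _ hn'] at this

theorem condNum_harmonicFrame_of_odd {n : ℕ} (hn : Odd n) (hn1 : 1 < n) :
    condNum (harmonicFrame n) = (ENNReal.ofReal √(1 - 2 * diamPerimRatio n))⁻¹ := by
  refine condNum_harmonicFrame_of_isGreatest hn1 ?_
  have hmax : n * (2 * diamPerimRatio n) = 1 / sin (π / (2 * n)) := by
    rw [diamPerimRatio]
    field_simp
  rw [hmax]
  simpa only [sum_abs_cos_two_pi_div_of_odd hn] using isGreatest_absCosSum hn.pos.ne'

theorem condNum_harmonicFrame_two_mul {k : ℕ} (hk : k ≠ 0) :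
    condNum (harmonicFrame (2 * k)) = (ENNReal.ofReal √(1 - 2 * diamPerimRatio k))⁻¹ := by
  refine condNum_harmonicFrame_of_isGreatest (by omega) ?_
  have hmax : (2 * k : ℕ) * (2 * diamPerimRatio k) = 2 * (1 / sin (π / (2 * k))) := by
    rw [diamPerimRatio]
    push_cast
    field_simp
  simp only [hmax, sum_abs_cos_two_pi_div_two_mul hk]
  rw [Set.range_comp' (fun x => 2 * x)]
  exact (monotone_mul_left_of_nonneg zero_le_two).map_isGreatest (isGreatest_absCosSum hk)

theorem condNum_harmonicFrame_lt_succ {n : ℕ} (hn : Odd n) (hn1 : 1 < n) :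
    condNum (harmonicFrame n) < condNum (harmonicFrame (n + 1)) := by
  obtain ⟨l, rfl⟩ := hn
  have hl : (1 : ℝ) < (l + 1 : ℕ) := mod_cast (by omega : 1 < l + 1)
  have hln : ((l + 1 : ℕ) : ℝ) < (2 * l + 1 : ℕ) := mod_cast (by omega : l + 1 < 2 * l + 1)
  have hlt : diamPerimRatio (2 * l + 1 : ℕ) < diamPerimRatio (l + 1 : ℕ) :=
    diamPerimRatio_strictAntiOn hl.le (hl.trans hln).le hln
  have hlt_half : diamPerimRatio (2 * l + 1 : ℕ) < 1 / 2 :=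
    diamPerimRatio_one ▸ diamPerimRatio_strictAntiOn Set.self_mem_Ici (hl.trans hln).le
      (hl.trans hln)
  rw [condNum_harmonicFrame_of_odd ⟨l, rfl⟩ hn1, show 2 * l + 1 + 1 = 2 * (l + 1) by ring,
    condNum_harmonicFrame_two_mul l.succ_ne_zero, ENNReal.inv_lt_inv,
    ENNReal.ofReal_lt_ofReal_iff (sqrt_pos.2 (by linarith)), sqrt_lt_sqrt_iff_of_pos (by linarith)]
  linarith

/-- For every even `m ≥ 4`, the harmonic frame `E_m` does not have
minimal condition number: some `A ∈ ℝ^{m×2}` has `β_A < β_{E_m}`. -/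
theorem stmt10 {m : ℕ} (hm : 4 ≤ m) (heven : Even m) :
    ∃ A : Fin m → E2, condNum A < condNum (harmonicFrame m) := by
  obtain ⟨n, rfl⟩ : ∃ n, m = n + 1 := ⟨m - 1, by omega⟩
  have hodd : Odd n := by grind
  refine ⟨Fin.snoc (harmonicFrame n) 0, ?_⟩
  rw [condNum_snoc_zero]
  exact condNum_harmonicFrame_lt_succ hodd (by omega)
end
end
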